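/- arXiv:1706.05398 — 6 statements merged into one kernel-verified Lean document; each statement's English description precedes it below -/
import Mathlib

section
/- Let X be a nonempty, compact, convex subset of ℝⁿ and let E : X → ℝⁿ be properly quasimonotone. Then there exists a stationary point p* ∈ X, i.e., a point p* such that ⟪E(p), p − p*⟫ ≥ 0 for all p ∈ X. -/
/-!
The set of stationary points is the intersection over `p ∈ X` of `X` with the closed half-spaces
`{q | 0 ≤ ⟪E p, p - q⟫}`; by compactness it suffices that finitely many of these have a common
point in `X`. Proper quasimonotonicity says that they form a KKM family: the convex hull of any
finite set of points is covered by the corresponding half-spaces.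

Since the members of this family are *convex*, the KKM principle does not require Brouwer's theorem
or Sperner's combinatorial lemma. It follows by induction on the number of points
(`kkm_of_closed_convex`): the induction hypothesis gives a common point when any one set is left
out, and Berge's intersection theorem (`berge_intersection`) then gives a common point of all of
them. Berge's theorem is proved by separating one set from the intersection of the others by a
hyperplane and applying induction to the traces on that hyperplane.
-/

open RealInnerProductSpace

/-- **Berge's intersection theorem**: if a compact convex set `U` is covered by finitely many (at
least one) closed convex sets, and all but any one of them have a common point in `U`, then they
all have a common point in `U`. -/
theorem berge_intersection {V ι : Type*} [NormedAddCommGroup V] [NormedSpace ℝ V] [DecidableEq ι]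
    (C : ι → Set V) (hcl : ∀ i, IsClosed (C i)) (hcv : ∀ i, Convex ℝ (C i))
    (s : Finset ι) (hs : s.Nonempty) :
    ∀ U : Set V, IsCompact U → Convex ℝ U → (∀ x ∈ U, ∃ i ∈ s, x ∈ C i) →
      (∀ i ∈ s, ∃ x ∈ U, ∀ j ∈ s.erase i, x ∈ C j) → ∃ x ∈ U, ∀ j ∈ s, x ∈ C j := by
  induction hs using Finset.Nonempty.cons_induction with
  | singleton a =>
    intro U _ _ hcov h
    obtain ⟨x, hx, -⟩ := h a (by simp)
    exact ⟨x, hx, by simpa using hcov x hx⟩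
  | cons a t ha ht ih =>
    intro U hU hUc hcov h
    by_contra hno
    push Not at hno
    have hDcl : IsClosed (⋂ j ∈ t, C j) := isClosed_biInter fun j _ => hcl j
    have hDcv : Convex ℝ (⋂ j ∈ t, C j) := convex_iInter₂ fun j _ => hcv j
    have hdisj : Disjoint (U ∩ ⋂ j ∈ t, C j) (U ∩ C a) := by
      rw [Set.disjoint_left]
      rintro x ⟨hxU, hxD⟩ ⟨-, hxa⟩
      obtain ⟨j, hj, hxj⟩ := hno x hxU
      simp only [Set.mem_iInter] at hxD
      rcases Finset.mem_cons.1 hj with rfl | hj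
      · exact hxj hxa
      · exact hxj (hxD j hj)
    obtain ⟨f, u, v, hfu, huv, hfv⟩ := geometric_hahn_banach_compact_closed
      (hUc.inter hDcv) (hU.inter_right hDcl) (hUc.inter (hcv a))
      (hU.isClosed.inter (hcl a)) hdisj
    obtain ⟨c, hcU, hc⟩ := h a (by simp)
    have hct : ∀ j ∈ t, c ∈ C j := fun j hj =>
      hc j (Finset.mem_erase.2 ⟨fun e => ha (e ▸ hj), Finset.mem_cons_of_mem hj⟩)
    have hfc : f c < u := hfu c ⟨hcU, by simpa using hct⟩
    obtain ⟨x, ⟨hxU, hxf⟩, hxt⟩ := ih (U ∩ f ⁻¹' {u})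
      (hU.inter_right (isClosed_singleton.preimage f.continuous))
      (hUc.inter ((convex_singleton u).linear_preimage f.toLinearMap))
      (by
        rintro x ⟨hxU, hxf⟩
        obtain ⟨i, hi, hxi⟩ := hcov x hxU
        rcases Finset.mem_cons.1 hi with rfl | hi
        · have h1 := hfv x ⟨hxU, hxi⟩
          have h2 : f x = u := hxf
          linarith
        · exact ⟨i, hi, hxi⟩)
      (by
        intro i hi
        obtain ⟨y, hyU, hy⟩ := h i (Finset.mem_cons_of_mem hi)
        have hya : y ∈ C a :=
          hy a (Finset.mem_erase.2 ⟨fun e => ha (e ▸ hi), by simp⟩)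
        have hfy : v < f y := hfv y ⟨hyU, hya⟩
        -- `c` and `y` lie on opposite sides of the hyperplane, so their segment crosses it
        obtain ⟨z, hz, hzf⟩ : ∃ z ∈ segment ℝ c y, f z = u :=
          (convex_segment c y).isPreconnected.intermediate_value
            (left_mem_segment ℝ c y) (right_mem_segment ℝ c y) f.continuous.continuousOn
            ⟨hfc.le, (huv.trans hfy).le⟩
        refine ⟨z, ⟨hUc.segment_subset hcU hyU hz, hzf⟩, fun j hj => ?_⟩
        obtain ⟨hji, hjt⟩ := Finset.mem_erase.1 hj
        exact (hcv j).segment_subset (hct j hjt)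
          (hy j (Finset.mem_erase.2 ⟨hji, Finset.mem_cons_of_mem hjt⟩)) hz)
    have h1 := hfu x ⟨hxU, by simpa using hxt⟩
    have h2 : f x = u := hxf
    linarith

/-- **The KKM principle for closed convex sets.** -/
theorem kkm_of_closed_convex {V ι : Type*} [NormedAddCommGroup V] [NormedSpace ℝ V]
    [DecidableEq ι] (p : ι → V)
    (C : ι → Set V) (hcl : ∀ i, IsClosed (C i)) (hcv : ∀ i, Convex ℝ (C i))
    (hkkm : ∀ s : Finset ι, ∀ x ∈ convexHull ℝ (p '' s), ∃ i ∈ s, x ∈ C i)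
    (s : Finset ι) (hs : s.Nonempty) :
    ∃ x ∈ convexHull ℝ (p '' s), ∀ i ∈ s, x ∈ C i := by
  induction s using Finset.strongInduction with
  | H s ih =>
    refine berge_intersection C hcl hcv s hs _
      ((s.finite_toSet.image p).isCompact_convexHull (𝕜 := ℝ)) (convex_convexHull ℝ _) (hkkm s) ?_
    intro i hi
    rcases (s.erase i).eq_empty_or_nonempty with he | he
    · exact ⟨p i, subset_convexHull ℝ _ ⟨i, hi, rfl⟩, by simp [he]⟩
    · obtain ⟨x, hx, hxC⟩ := ih _ (Finset.erase_ssubset hi) he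
      exact ⟨x, convexHull_mono (Set.image_mono (by simp)) hx, hxC⟩

/-- Sufficiency direction of the paper's Theorem 4.1 (Daniilidis–Hadjisavvas):
a properly quasimonotone map on a nonempty compact convex subset of ℝⁿ admits
a stationary point (a solution of the Minty variational inequality). -/
theorem stationary_point_exists_of_properly_quasimonotone
    (n : ℕ) (X : Set (EuclideanSpace ℝ (Fin n)))
    (hne : X.Nonempty) (hcomp : IsCompact X) (hconv : Convex ℝ X)
    (E : EuclideanSpace ℝ (Fin n) → EuclideanSpace ℝ (Fin n))
    (hpqm : ∀ (m : ℕ) (p : Fin m → EuclideanSpace ℝ (Fin n)),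
      (∀ i, p i ∈ X) → ∀ q ∈ convexHull ℝ (Set.range p),
        ∃ j, 0 ≤ ⟪E (p j), p j - q⟫) :
    ∃ p₀ ∈ X, ∀ p ∈ X, 0 ≤ ⟪E p, p - p₀⟫ := by
  classical
  let C : X → Set (EuclideanSpace ℝ (Fin n)) := fun p => {q | 0 ≤ ⟪E p, (p : _) - q⟫}
  have hcl : ∀ p, IsClosed (C p) := fun p =>
    isClosed_le continuous_const (by fun_prop)
  have hcv : ∀ p, Convex ℝ (C p) := by
    intro p x hx y hy a b ha hb hab
    simp only [C, Set.mem_ofPred_eq, inner_sub_right, inner_add_right, inner_smul_right] at *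
    have hb' : b = 1 - a := by linarith
    subst hb'
    nlinarith [mul_nonneg ha hx, mul_nonneg hb hy]
  have hkkm : ∀ s : Finset X, ∀ x ∈ convexHull ℝ ((↑) '' (s : Set X)), ∃ i ∈ s, x ∈ C i := by
    intro s x hx
    have hr : Set.range (fun k => ((s.equivFin.symm k : X) : EuclideanSpace ℝ (Fin n)))
        = (↑) '' (s : Set X) := by
      ext y
      constructor
      · rintro ⟨k, rfl⟩
        exact ⟨_, (s.equivFin.symm k).2, rfl⟩
      · rintro ⟨z, hz, rfl⟩
        exact ⟨s.equivFin ⟨z, hz⟩, by simp⟩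
    obtain ⟨j, hj⟩ := hpqm s.card (fun k => ((s.equivFin.symm k : X) : EuclideanSpace ℝ (Fin n)))
      (fun k => (s.equivFin.symm k : X).2) x (hr ▸ hx)
    exact ⟨_, (s.equivFin.symm j).2, hj⟩
  obtain ⟨q, hqX, hq⟩ := hcomp.inter_iInter_nonempty C hcl (by
    intro s
    rcases s.eq_empty_or_nonempty with rfl | hs
    · simpa using hne
    · obtain ⟨x, hx, hxC⟩ := kkm_of_closed_convex (↑) C hcl hcv hkkm s hs
      refine ⟨x, convexHull_min ?_ hconv hx, by simpa using hxC⟩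
      rintro _ ⟨z, -, rfl⟩
      exact z.2)
  exact ⟨q, hqX, fun p hp => Set.mem_iInter.1 hq ⟨p, hp⟩⟩
end

section
/- Let X be a convex subset of ℝⁿ and let E : X → ℝⁿ. Suppose that for every nonempty finite set F ⊆ X, the Minty variational inequality on the convex hull C of F has a solution, i.e., there exists p* ∈ C such that ⟪E(p), p − p*⟫ ≥ 0 for all p ∈ C. Then E is properly quasimonotone on X. -/
/-! If the conclusion fails for `q` in the convex hull of a finite set `s`, then `q` lies in none of
the half-spaces `{x | 0 ≤ ⟪E p, p - x⟫}`, `p ∈ s`, whereas a Minty solution `p₀` on the hull lies in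
all of them. Along the ray from `p₀` through `q`, each affine function `x ↦ ⟪E p, p - x⟫` is
nonnegative at `p₀` and negative at `q`, hence negative at every point beyond `q`. Following the ray
until it leaves the hull gives a point in the hull of a proper subset of `s`
(`exists_mem_convexHull_erase`) at which the conclusion still fails, so strong induction on `s`
applies. The empty set, whose hull is empty, is the base case. -/

open RealInnerProductSpace

/-- The ray from `p₀` through `q`, followed until a barycentric coordinate vanishes, reaches the hull
of `s` with one point removed. -/
lemma exists_mem_convexHull_erase {V : Type*} [AddCommGroup V] [Module ℝ V] [DecidableEq V]
    {s : Finset V} {p₀ q : V} (hp₀ : p₀ ∈ convexHull ℝ (s : Set V))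
    (hq : q ∈ convexHull ℝ (s : Set V)) (hne : q ≠ p₀) :
    ∃ i ∈ s, ∃ t : ℝ, 0 ≤ t ∧
      q + t • (q - p₀) ∈ convexHull ℝ ((s.erase i : Finset V) : Set V) := by
  rw [Finset.mem_convexHull'] at hp₀ hq
  obtain ⟨v, hv0, hv1, hvp⟩ := hp₀
  obtain ⟨w, hw0, hw1, hwq⟩ := hq
  -- Both weight families sum to `1` and they differ, so some coordinate decreases along the ray.
  have hdec : (s.filter fun y => w y < v y).Nonempty := by
    rw [Finset.filter_nonempty_iff]
    by_contra! hle
    have heq := (Finset.sum_eq_sum_iff_of_le hle).1 (hv1.trans hw1.symm)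
    refine hne ?_
    rw [← hwq, ← hvp]
    exact Finset.sum_congr rfl fun y hy => by rw [heq y hy]
  -- The coordinate of `y` vanishes at parameter `w y / (v y - w y)`; stop at the earliest such time.
  obtain ⟨i, hi, hmin⟩ :=
    Finset.exists_min_image _ (fun y => w y / (v y - w y)) hdec
  obtain ⟨his, hiv⟩ := Finset.mem_filter.1 hi
  have hdi : 0 < v i - w i := sub_pos.2 hiv
  set t := w i / (v i - w i) with ht
  have ht0 : 0 ≤ t := div_nonneg (hw0 i his) hdi.le
  have hti : w i + t * (w i - v i) = 0 := by
    have : t * (v i - w i) = w i := div_mul_cancel₀ _ hdi.ne'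
    linarith
  refine ⟨i, his, t, ht0, ?_⟩
  rw [Finset.mem_convexHull']
  refine ⟨fun y => w y + t * (w y - v y), fun y hy => ?_, ?_, ?_⟩
  · have hys := Finset.mem_of_mem_erase hy
    by_cases h : w y < v y
    · have := (le_div_iff₀ (sub_pos.2 h)).1 (hmin y (Finset.mem_filter.2 ⟨hys, h⟩))
      linarith
    · exact add_nonneg (hw0 y hys) (mul_nonneg ht0 (sub_nonneg.2 (not_lt.1 h)))
  · rw [Finset.sum_erase s hti, Finset.sum_add_distrib, ← Finset.mul_sum,
      Finset.sum_sub_distrib, hw1, hv1]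
    ring
  · rw [Finset.sum_erase s (by simp only [hti, zero_smul])]
    simp only [add_smul, mul_smul, sub_smul, Finset.sum_add_distrib, ← Finset.smul_sum,
      Finset.sum_sub_distrib, hwq, hvp]

/-- Necessity direction of the paper's Theorem 4.1 (R. John): if the Minty
variational inequality is solvable on the convex hull of every nonempty finite
subset of X, then E is properly quasimonotone on X. -/
theorem properly_quasimonotone_of_minty_solvable_on_polytopes
    (n : ℕ) (X : Set (EuclideanSpace ℝ (Fin n))) (hconv : Convex ℝ X)
    (E : EuclideanSpace ℝ (Fin n) → EuclideanSpace ℝ (Fin n))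
    (hminty : ∀ F : Finset (EuclideanSpace ℝ (Fin n)), F.Nonempty → ↑F ⊆ X →
      ∃ p₀ ∈ convexHull ℝ (F : Set (EuclideanSpace ℝ (Fin n))),
        ∀ p ∈ convexHull ℝ (F : Set (EuclideanSpace ℝ (Fin n))),
          0 ≤ ⟪E p, p - p₀⟫) :
    ∀ (m : ℕ) (p : Fin m → EuclideanSpace ℝ (Fin n)),
      (∀ i, p i ∈ X) → ∀ q ∈ convexHull ℝ (Set.range p),
        ∃ j, 0 ≤ ⟪E (p j), p j - q⟫ := by
  classical
  have key : ∀ s : Finset (EuclideanSpace ℝ (Fin n)), ↑s ⊆ X →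
      ∀ q ∈ convexHull ℝ (s : Set (EuclideanSpace ℝ (Fin n))),
        ∃ x ∈ s, 0 ≤ ⟪E x, x - q⟫ := by
    intro s
    induction s using Finset.strongInduction with
    | H s ih =>
      intro hsX q hq
      have hs : s.Nonempty :=
        Finset.coe_nonempty.1 (convexHull_nonempty_iff.1 ⟨q, hq⟩)
      obtain ⟨p₀, hp₀, hsol⟩ := hminty s hs hsX
      by_cases hne : q = p₀
      · obtain ⟨x, hx⟩ := hs
        exact ⟨x, hx, hne ▸ hsol x (subset_convexHull ℝ _ hx)⟩
      obtain ⟨i, hi, t, ht, hr⟩ := exists_mem_convexHull_erase hp₀ hq hne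
      obtain ⟨x, hx, hxr⟩ := ih _ (Finset.erase_ssubset hi)
        ((Finset.coe_subset.2 (Finset.erase_subset i s)).trans hsX) _ hr
      have hxs := Finset.mem_of_mem_erase hx
      have hx0 := hsol x (subset_convexHull ℝ _ hxs)
      refine ⟨x, hxs, ?_⟩
      -- `q` lies between `p₀` and `r = q + t • (q - p₀)`, and both are in the half-space of `x`.
      have hcomb : (1 + t) * ⟪E x, x - q⟫ =
          ⟪E x, x - (q + t • (q - p₀))⟫ + t * ⟪E x, x - p₀⟫ := by
        simp only [inner_sub_right, inner_add_right, real_inner_smul_right]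
        ring
      have hpos : 0 ≤ (1 + t) * ⟪E x, x - q⟫ := by
        rw [hcomb]
        exact add_nonneg hxr (mul_nonneg ht hx0)
      exact nonneg_of_mul_nonneg_right hpos (by linarith)
  intro m p hp q hq
  obtain ⟨x, hx, hxq⟩ := key (Finset.univ.image p)
    (by simpa [Set.range_subset_iff] using hp) q (by simpa using hq)
  obtain ⟨j, -, rfl⟩ := Finset.mem_image.1 hx
  exact ⟨j, hxq⟩
end

section
/- Let X be a convex subset of ℝⁿ and let E : X → ℝⁿ. Then E is properly quasimonotone if and only if for every finite family of points p₁, …, pₘ ∈ X there exists a point p in the convex hull of {p₁, …, pₘ} such that ⟪E(pⱼ), pⱼ − p⟫ ≥ 0 for every j = 1, …, m. -/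
open RealInnerProductSpace

/-!
Write `C j` for the closed half-space of points `x` with `0 ≤ ⟪E (p j), p j - x⟫`. Proper
quasimonotonicity says that the convex hull of every subfamily of `p` is covered by the
corresponding `C j`; the other condition says that the `C j` of every nonempty subfamily share a
point of its hull.

Covering implies intersection: this is the Knaster–Kuratowski–Mazurkiewicz principle, which for
convex sets needs no fixed point theorem. It follows from Klee's intersection theorem
(`klee_intersection`): if a compact convex set `K` is covered by finitely many closed convex sets,
and any all-but-one of them share a point of `K`, then all of them do. The all-but-one hypothesis
comes from induction on the size of the subfamily (`common_point_of_covering`).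

Intersection implies covering: suppose `q = ∑ w i • p i` satisfies `⟪E (p j), p j - q⟫ < 0` for all
`j`, and let `q' = ∑ μ i • p i` be a common point of the `C j`. Moving from `q` straight away from
`q'` keeps all these inequalities strict, and one can move until a barycentric coordinate vanishes.
This gives a counterexample for a smaller family, and the descent ends with the empty one
(`weights_eq_empty`).
-/

/-- Klee's intersection theorem, relative to a compact convex set `K` covered by the `C i`. -/
lemma klee_intersection {V ι : Type*} [NormedAddCommGroup V] [NormedSpace ℝ V] [DecidableEq ι]
    (C : ι → Set V) (hconv : ∀ i, Convex ℝ (C i)) (hclosed : ∀ i, IsClosed (C i))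
    (s : Finset ι) (hs : s.Nonempty) :
    ∀ K : Set V, Convex ℝ K → IsCompact K → (∀ x ∈ K, ∃ i ∈ s, x ∈ C i) →
      (∀ j ∈ s, ∃ x ∈ K, ∀ i ∈ s, i ≠ j → x ∈ C i) → ∃ x ∈ K, ∀ i ∈ s, x ∈ C i := by
  induction hs using Finset.Nonempty.cons_induction with
  | singleton a =>
    intro K _ _ hcov hint
    obtain ⟨x, hx, -⟩ := hint a (by simp)
    exact ⟨x, hx, by simpa using hcov x hx⟩
  | cons a t hat ht ih =>
    intro K hK hKc hcov hint
    by_contra! hcon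
    have hbig : IsClosed (⋂ i ∈ t, C i) := isClosed_biInter fun i _ => hclosed i
    have hbigc : Convex ℝ (⋂ i ∈ t, C i) := convex_iInter₂ fun i _ => hconv i
    have hdisj : Disjoint (K ∩ ⋂ i ∈ t, C i) (C a) := by
      rw [Set.disjoint_left]
      rintro x ⟨hxK, hxt⟩ hxa
      obtain ⟨i, hi, hxi⟩ := hcon x hxK
      rcases Finset.mem_cons.1 hi with rfl | hi
      · exact hxi hxa
      · exact hxi (Set.mem_iInter₂.1 hxt i hi)
    obtain ⟨f, u, v, hfu, huv, hfv⟩ := geometric_hahn_banach_compact_closed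
      (hK.inter hbigc) (hKc.inter_right hbig) (hconv a) (hclosed a) hdisj
    obtain ⟨y, hyK, hy⟩ := hint a (by simp)
    have hyt : ∀ i ∈ t, y ∈ C i := fun i hi =>
      hy i (Finset.mem_cons_of_mem hi) (fun h => hat (h ▸ hi))
    have hyu : f y < u := hfu y ⟨hyK, Set.mem_iInter₂.2 hyt⟩
    -- The slice of `K` by the separating hyperplane misses `C a`, so the `C i` with `i ∈ t` cover it.
    obtain ⟨x, ⟨hxK, hxf⟩, hxt⟩ := ih (K ∩ {x | f x = u})
      (hK.inter (convex_hyperplane f.toLinearMap.isLinear u))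
      (hKc.inter_right (isClosed_eq f.continuous continuous_const))
      (by
        rintro x ⟨hxK, hxf⟩
        obtain ⟨i, hi, hxi⟩ := hcov x hxK
        rcases Finset.mem_cons.1 hi with rfl | hi
        · have h1 := hfv x hxi
          have h2 : f x = u := hxf
          linarith
        · exact ⟨i, hi, hxi⟩)
      (by
        intro j hj
        obtain ⟨z, hzK, hz⟩ := hint j (Finset.mem_cons_of_mem hj)
        have hza : z ∈ C a := hz a (by simp) (fun h => hat (h ▸ hj))
        -- A point of `C a` and a point of the other intersection lie on opposite sides.
        have hS : Convex ℝ (K ∩ ⋂ i ∈ t.erase j, C i) :=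
          hK.inter (convex_iInter₂ fun i _ => hconv i)
        obtain ⟨x, ⟨hxK, hx⟩, hxf⟩ := hS.isPreconnected.intermediate_value
          (a := y) (b := z)
          ⟨hyK, Set.mem_iInter₂.2 fun i hi => hyt i (Finset.mem_of_mem_erase hi)⟩
          ⟨hzK, Set.mem_iInter₂.2 fun i hi => hz i
            (Finset.mem_cons_of_mem (Finset.mem_of_mem_erase hi)) (Finset.ne_of_mem_erase hi)⟩
          f.continuous.continuousOn ⟨hyu.le, (huv.trans (hfv z hza)).le⟩
        exact ⟨x, ⟨hxK, hxf⟩, fun i hi hij =>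
          Set.mem_iInter₂.1 hx i (Finset.mem_erase.2 ⟨hij, hi⟩)⟩)
    have h1 := hfu x ⟨hxK, Set.mem_iInter₂.2 hxt⟩
    have h2 : f x = u := hxf
    linarith

/-- The Knaster–Kuratowski–Mazurkiewicz principle for closed convex sets. -/
lemma common_point_of_covering {V ι : Type*} [NormedAddCommGroup V] [NormedSpace ℝ V]
    (p : ι → V) (C : ι → Set V) (hconv : ∀ i, Convex ℝ (C i)) (hclosed : ∀ i, IsClosed (C i))
    (hcov : ∀ t : Finset ι, ∀ x ∈ convexHull ℝ (p '' t), ∃ i ∈ t, x ∈ C i)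
    (t : Finset ι) (ht : t.Nonempty) :
    ∃ x ∈ convexHull ℝ (p '' t), ∀ i ∈ t, x ∈ C i := by
  classical
  induction t using Finset.strongInduction with
  | H t ih =>
    refine klee_intersection C hconv hclosed t ht _ (convex_convexHull ℝ _)
      ((t.finite_toSet.image p).isCompact_convexHull ℝ) (hcov t) fun j hj => ?_
    rcases (t.erase j).eq_empty_or_nonempty with he | hne
    · refine ⟨p j, subset_convexHull ℝ _ ⟨j, hj, rfl⟩, fun i hi hij => ?_⟩
      have : i ∈ t.erase j := Finset.mem_erase.2 ⟨hij, hi⟩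
      simp [he] at this
    · obtain ⟨x, hx, hxC⟩ := ih _ (Finset.erase_ssubset hj) hne
      exact ⟨x, convexHull_mono (Set.image_mono (by simp)) hx,
        fun i hi hij => hxC i (Finset.mem_erase.2 ⟨hij, hi⟩)⟩

/-- Barycentric weights indexed by the family itself, which need not be injective. -/
lemma exists_weights {V ι : Type*} [AddCommGroup V] [Module ℝ V] (p : ι → V) (t : Finset ι)
    {x : V} (hx : x ∈ convexHull ℝ (p '' t)) :
    ∃ w : ι → ℝ, (∀ i, 0 ≤ w i) ∧ ∑ i ∈ t, w i = 1 ∧ ∑ i ∈ t, w i • p i = x := by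
  classical
  refine convexHull_min (t := {x | ∃ w : ι → ℝ, (∀ i, 0 ≤ w i) ∧ ∑ i ∈ t, w i = 1 ∧
    ∑ i ∈ t, w i • p i = x}) ?_ ?_ hx
  · rintro _ ⟨i, hi, rfl⟩
    have hi' : i ∈ t := hi
    refine ⟨fun k => if k = i then 1 else 0, fun k => ?_, ?_, ?_⟩
    · dsimp only
      split_ifs <;> norm_num
    · simp [hi']
    · simp [ite_smul, hi']
  · rintro _ ⟨w, hw, hw1, rfl⟩ _ ⟨w', hw', hw1', rfl⟩ a b ha hb hab
    refine ⟨fun i => a * w i + b * w' i, fun i => ?_, ?_, ?_⟩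
    · have := hw i
      have := hw' i
      positivity
    · rw [Finset.sum_add_distrib, ← Finset.mul_sum, ← Finset.mul_sum, hw1, hw1']
      linarith
    · simp only [add_smul, mul_smul, Finset.sum_add_distrib, Finset.smul_sum]

lemma inner_sub_weighted {V ι : Type*} [NormedAddCommGroup V] [InnerProductSpace ℝ V]
    (p : ι → V) (t : Finset ι) (w : ι → ℝ) (hw : ∑ i ∈ t, w i = 1) (e y : V) :
    ⟪e, y - ∑ i ∈ t, w i • p i⟫ = ∑ i ∈ t, w i * ⟪e, y - p i⟫ := by
  have : y - ∑ i ∈ t, w i • p i = ∑ i ∈ t, w i • (y - p i) := by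
    simp only [smul_sub, Finset.sum_sub_distrib, ← Finset.sum_smul, hw, one_smul]
  rw [this, inner_sum]
  simp only [inner_smul_right]

/-- If every nonempty principal submatrix of `A` sends some weight vector to a nonnegative vector,
then no nonnegative `w` satisfies `A w < 0` on a nonempty principal submatrix. -/
lemma weights_eq_empty {ι : Type*} (A : ι → ι → ℝ)
    (h : ∀ t : Finset ι, t.Nonempty → ∃ μ : ι → ℝ, (∀ i, 0 ≤ μ i) ∧ ∑ i ∈ t, μ i = 1 ∧
      ∀ j ∈ t, 0 ≤ ∑ i ∈ t, μ i * A j i)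
    (t : Finset ι) (w : ι → ℝ) (hw : ∀ i ∈ t, 0 ≤ w i)
    (hneg : ∀ j ∈ t, ∑ i ∈ t, w i * A j i < 0) : t = ∅ := by
  classical
  induction t using Finset.strongInduction generalizing w with
  | H t ih =>
    by_contra hne
    have ht : t.Nonempty := Finset.nonempty_iff_ne_empty.2 hne
    obtain ⟨μ, hμ, hμ1, hμA⟩ := h t ht
    have hpos : (t.filter fun i => 0 < μ i).Nonempty := by
      obtain ⟨i, hi, hi'⟩ := Finset.exists_lt_of_sum_lt
        (s := t) (f := fun _ => (0 : ℝ)) (g := μ) (by simp [hμ1])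
      exact ⟨i, Finset.mem_filter.2 ⟨hi, hi'⟩⟩
    -- `r = w k / μ k` is the largest `r` for which `w - r μ` stays nonnegative; entry `k` vanishes.
    obtain ⟨k, hk, hkmin⟩ := Finset.exists_min_image _ (fun i => w i / μ i) hpos
    obtain ⟨hkt, hkpos⟩ := Finset.mem_filter.1 hk
    set r := w k / μ k with hr
    have hr0 : 0 ≤ r := div_nonneg (hw k hkt) hkpos.le
    have hν : ∀ i ∈ t, 0 ≤ w i - r * μ i := by
      intro i hi
      rcases (hμ i).eq_or_lt with h0 | h0
      · rw [← h0]
        simpa using hw i hi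
      · have := hkmin i (Finset.mem_filter.2 ⟨hi, h0⟩)
        rw [le_div_iff₀ h0] at this
        linarith
    have hνk : w k - r * μ k = 0 := by
      rw [hr]
      field_simp
      ring
    have hνA : ∀ j ∈ t, ∑ i ∈ t.erase k, (w i - r * μ i) * A j i < 0 := by
      intro j hj
      have e : ∑ i ∈ t.erase k, (w i - r * μ i) * A j i
          = ∑ i ∈ t, w i * A j i - r * ∑ i ∈ t, μ i * A j i := by
        rw [Finset.sum_erase _ (by rw [hνk, zero_mul]), Finset.mul_sum, ← Finset.sum_sub_distrib]
        exact Finset.sum_congr rfl fun i _ => by ring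
      rw [e]
      have := hneg j hj
      have := mul_nonneg hr0 (hμA j hj)
      linarith
    have hempty := ih _ (Finset.erase_ssubset hkt) (fun i => w i - r * μ i)
      (fun i hi => hν i (Finset.mem_of_mem_erase hi))
      (fun j hj => hνA j (Finset.mem_of_mem_erase hj))
    have := hνA k hkt
    simp [hempty] at this

/-- Paper's Lemma 4.1 (R. John): E is properly quasimonotone if and only if
for every finite family p₁, …, pₘ ∈ X there exists a point p in the convex
hull of {p₁, …, pₘ} with ⟪E(pⱼ), pⱼ − p⟫ ≥ 0 for every j. -/
theorem properly_quasimonotone_iff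
    (n : ℕ) (X : Set (EuclideanSpace ℝ (Fin n))) (hconv : Convex ℝ X)
    (E : EuclideanSpace ℝ (Fin n) → EuclideanSpace ℝ (Fin n)) :
    (∀ (m : ℕ) (p : Fin m → EuclideanSpace ℝ (Fin n)),
        (∀ i, p i ∈ X) → ∀ q ∈ convexHull ℝ (Set.range p),
          ∃ j, 0 ≤ ⟪E (p j), p j - q⟫) ↔
      (∀ (m : ℕ) (p : Fin m → EuclideanSpace ℝ (Fin n)), 0 < m →
        (∀ i, p i ∈ X) →
          ∃ q ∈ convexHull ℝ (Set.range p), ∀ j, 0 ≤ ⟪E (p j), p j - q⟫) := by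
  -- A subfamily indexed by a finset is a family indexed by `Fin t.card`.
  have hrange : ∀ {m : ℕ} (p : Fin m → EuclideanSpace ℝ (Fin n)) (t : Finset (Fin m)),
      Set.range (p ∘ t.orderEmbOfFin rfl) = p '' t := by
    intro m p t
    rw [Set.range_comp, Finset.range_orderEmbOfFin]
  constructor
  · intro h m p hm hp
    have : Nonempty (Fin m) := ⟨⟨0, hm⟩⟩
    obtain ⟨q, hq, hqC⟩ := common_point_of_covering p (fun j => {x | 0 ≤ ⟪E (p j), p j - x⟫})
      (fun j => by
        have : {x | 0 ≤ ⟪E (p j), p j - x⟫} = {x | innerSL ℝ (E (p j)) x ≤ ⟪E (p j), p j⟫} := by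
          ext x
          simp [inner_sub_right]
        rw [this]
        exact convex_halfSpace_le (innerSL ℝ (E (p j))).toLinearMap.isLinear _)
      (fun j => isClosed_le continuous_const (by fun_prop))
      (fun t x hx => by
        obtain ⟨j, hj⟩ := h _ (p ∘ t.orderEmbOfFin rfl) (fun i => hp _) x (by rwa [hrange])
        exact ⟨_, t.orderEmbOfFin_mem rfl j, hj⟩)
      Finset.univ Finset.univ_nonempty
    exact ⟨q, by simpa using hq, fun j => hqC j (Finset.mem_univ j)⟩
  · intro h m p hp q hq
    by_contra! hcon
    obtain ⟨w, hw, hw1, rfl⟩ := exists_weights p Finset.univ (x := q) (by simpa using hq)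
    have hempty := weights_eq_empty (fun j i => ⟪E (p j), p j - p i⟫)
      (fun t ht => by
        obtain ⟨x, hx, hxC⟩ := h _ (p ∘ t.orderEmbOfFin rfl) ht.card_pos (fun i => hp _)
        rw [hrange] at hx
        obtain ⟨μ, hμ, hμ1, rfl⟩ := exists_weights p t hx
        refine ⟨μ, hμ, hμ1, fun j hj => ?_⟩
        obtain ⟨l, rfl⟩ : j ∈ Set.range (t.orderEmbOfFin rfl) := by
          rw [Finset.range_orderEmbOfFin]
          exact hj
        rw [← inner_sub_weighted p t μ hμ1]
        exact hxC l)
      Finset.univ w (fun i _ => hw i)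
      (fun j _ => by
        rw [← inner_sub_weighted p _ w hw1]
        exact hcon j)
    rw [hempty] at hw1
    simp at hw1
end

section
/- Let X be a convex subset of ℝⁿ and let E : X → ℝⁿ be strict-properly quasimonotone. Then the variational inequality VI(E, X) has at most one solution: if p* and q* both satisfy ⟪E(p*), p − p*⟫ ≥ 0 for all p ∈ X and ⟪E(q*), p − q*⟫ ≥ 0 for all p ∈ X, then p* = q*. -/
open RealInnerProductSpace

/-- Paper's Theorem 4.2: a strict-properly quasimonotone map on a convex
subset of ℝⁿ has at most one solution of the variational inequality VI(E, X). -/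
theorem vi_at_most_one_solution_of_strict_properly_quasimonotone
    (n : ℕ) (X : Set (EuclideanSpace ℝ (Fin n))) (hconv : Convex ℝ X)
    (E : EuclideanSpace ℝ (Fin n) → EuclideanSpace ℝ (Fin n))
    (hspqm : ∀ (m : ℕ) (p : Fin m → EuclideanSpace ℝ (Fin n)),
      (∀ i, p i ∈ X) → ∀ q ∈ convexHull ℝ (Set.range p),
        (∀ i, q ≠ p i) → ∃ j, 0 < ⟪E (p j), p j - q⟫)
    (p₀ q₀ : EuclideanSpace ℝ (Fin n))
    (hp₀ : p₀ ∈ X) (hp₀sol : ∀ p ∈ X, 0 ≤ ⟪E p₀, p - p₀⟫)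
    (hq₀ : q₀ ∈ X) (hq₀sol : ∀ p ∈ X, 0 ≤ ⟪E q₀, p - q₀⟫) :
    p₀ = q₀ := by
  by_contra hne
  -- The midpoint is a convex combination of the two solutions distinct from both, so strict
  -- proper quasimonotonicity contradicts one of the two variational inequalities there.
  have hmX : midpoint ℝ p₀ q₀ ∈ X :=
    hconv.segment_subset hp₀ hq₀ (midpoint_mem_segment p₀ q₀)
  have key : ∀ x : EuclideanSpace ℝ (Fin n), (∀ p ∈ X, 0 ≤ ⟪E x, p - x⟫) →
      ¬ 0 < ⟪E x, x - midpoint ℝ p₀ q₀⟫ := by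
    intro x hx hpos
    have h := hx _ hmX
    rw [← neg_sub, inner_neg_right] at h
    linarith
  obtain ⟨j, hj⟩ := hspqm 2 ![p₀, q₀]
    (by simp [Fin.forall_fin_two, hp₀, hq₀]) (midpoint ℝ p₀ q₀)
    (by
      rw [Matrix.range_cons_cons_empty, convexHull_pair]
      exact midpoint_mem_segment p₀ q₀)
    (by simp [Fin.forall_fin_two, midpoint_eq_left_iff, midpoint_eq_right_iff, hne])
  fin_cases j
  · exact key p₀ hp₀sol hj
  · exact key q₀ hq₀sol hj
end

section
/- Let X be a convex subset of ℝⁿ and let E : X → ℝⁿ be strict-properly quasimonotone. Then E has at most one stationary point: if p* and q* both satisfy ⟪E(p), p − p*⟫ ≥ 0 for all p ∈ X and ⟪E(p), p − q*⟫ ≥ 0 for all p ∈ X, then p* = q*. -/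
/-!
If `p₀` and `q₀` are both stationary and `x` lies strictly between them, then `x - p₀` and `x - q₀`
are opposite multiples of `q₀ - p₀`, so the two stationarity inequalities at `x` force
`⟪E x, q₀ - p₀⟫ = 0`. When `p₀ ≠ q₀`, strict proper quasimonotonicity fails for two points of the
open segment and their midpoint. The endpoints themselves would not do: stationarity only
constrains the sign of `⟪E p₀, q₀ - p₀⟫` and `⟪E q₀, q₀ - p₀⟫`.
-/

open RealInnerProductSpace

/-- Uniqueness of the stationary price vector (used in paper's Theorem 4.3,
(a) ⟹ (b)): a strict-properly quasimonotone map on a convex subset of ℝⁿ has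
at most one stationary point (Minty solution). -/
theorem stationary_point_at_most_one_of_strict_properly_quasimonotone
    (n : ℕ) (X : Set (EuclideanSpace ℝ (Fin n))) (hconv : Convex ℝ X)
    (E : EuclideanSpace ℝ (Fin n) → EuclideanSpace ℝ (Fin n))
    (hspqm : ∀ (m : ℕ) (p : Fin m → EuclideanSpace ℝ (Fin n)),
      (∀ i, p i ∈ X) → ∀ q ∈ convexHull ℝ (Set.range p),
        (∀ i, q ≠ p i) → ∃ j, 0 < ⟪E (p j), p j - q⟫)
    (p₀ q₀ : EuclideanSpace ℝ (Fin n))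
    (hp₀ : p₀ ∈ X) (hp₀st : ∀ p ∈ X, 0 ≤ ⟪E p, p - p₀⟫)
    (hq₀ : q₀ ∈ X) (hq₀st : ∀ p ∈ X, 0 ≤ ⟪E p, p - q₀⟫) :
    p₀ = q₀ := by
  by_contra hne
  have hd : q₀ - p₀ ≠ 0 := sub_ne_zero.mpr (Ne.symm hne)
  have hmem : ∀ t : ℝ, 0 < t → t < 1 → p₀ + t • (q₀ - p₀) ∈ X := fun t h0 h1 =>
    hconv.add_smul_sub_mem hp₀ hq₀ ⟨h0.le, h1.le⟩
  have hzero : ∀ t : ℝ, 0 < t → t < 1 → ⟪E (p₀ + t • (q₀ - p₀)), q₀ - p₀⟫ = 0 := by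
    intro t h0 h1
    have h2 := hp₀st _ (hmem t h0 h1)
    have h3 := hq₀st _ (hmem t h0 h1)
    have e2 : p₀ + t • (q₀ - p₀) - p₀ = t • (q₀ - p₀) := by module
    have e3 : p₀ + t • (q₀ - p₀) - q₀ = (t - 1) • (q₀ - p₀) := by module
    rw [e2, real_inner_smul_right] at h2
    rw [e3, real_inner_smul_right] at h3
    have h4 := nonneg_of_mul_nonneg_right h2 h0
    nlinarith
  obtain ⟨s, hs⟩ : ∃ s : Fin 2 → ℝ, s = ![1 / 4, 3 / 4] := ⟨_, rfl⟩
  have hs0 : ∀ i, 0 < s i := by intro i; fin_cases i <;> norm_num [hs]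
  have hs1 : ∀ i, s i < 1 := by intro i; fin_cases i <;> norm_num [hs]
  have hs2 : ∀ i, (1 / 2 : ℝ) - s i ≠ 0 := by intro i; fin_cases i <;> norm_num [hs]
  obtain ⟨j, hj⟩ := hspqm 2 (fun i => p₀ + s i • (q₀ - p₀))
    (fun i => hmem _ (hs0 i) (hs1 i)) (p₀ + (1 / 2 : ℝ) • (q₀ - p₀)) (by
      have h := (convex_convexHull ℝ (Set.range fun i => p₀ + s i • (q₀ - p₀)))
        (subset_convexHull ℝ _ ⟨0, rfl⟩) (subset_convexHull ℝ _ ⟨1, rfl⟩)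
        (by norm_num : (0 : ℝ) ≤ 1 / 2) (by norm_num : (0 : ℝ) ≤ 1 / 2) (by norm_num)
      convert h using 1
      simp only [hs, Matrix.cons_val_zero, Matrix.cons_val_one]
      module)
    (by
      intro i h
      have h' : ((1 / 2 : ℝ) - s i) • (q₀ - p₀) = 0 := by
        rw [sub_smul, add_left_cancel h, sub_self]
      exact (smul_ne_zero (hs2 i) hd) h')
  have e : p₀ + s j • (q₀ - p₀) - (p₀ + (1 / 2 : ℝ) • (q₀ - p₀))
      = (s j - 1 / 2) • (q₀ - p₀) := by module
  simp only [e, real_inner_smul_right, hzero _ (hs0 j) (hs1 j), mul_zero, lt_irrefl] at hj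
end

section
/- Let X be a nonempty, compact, convex subset of ℝⁿ and let E : X → ℝⁿ be continuous and strict-properly quasimonotone. Then there exists a unique stationary point p* ∈ X, i.e., a unique p* ∈ X such that ⟪E(p), p − p*⟫ ≥ 0 for all p ∈ X. -/
open RealInnerProductSpace

/-!
The Minty condition at `p` cuts out the closed half-space `{q | 0 ≤ ⟪E p, p - q⟫}`, so stationary
points are the common points of a family of compact convex subsets of `X`. Quasimonotonicity says
that this family has the KKM property: the convex hull of finitely many `p i` is covered by their
half-spaces. Since the sets are convex, the KKM lemma needs no Brouwer-type theorem: it follows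
(`kkm_of_convex`) from the Klee–Berge intersection theorem (`klee_berge`), which is proved by
Hahn–Banach separation. Compactness of `X` passes from finite to arbitrary subfamilies.

For uniqueness, continuity turns a Minty solution into a Stampacchia solution
(`stampacchia_of_minty`). If `a ≠ b` are two of them, then `⟪E a, a - b⟫ ≤ 0` and
`⟪E b, b - a⟫ ≤ 0`, which contradicts strict proper quasimonotonicity at the midpoint of `a, b`.
-/

/-- **Klee–Berge theorem**: if finitely many compact convex sets have convex union `U` and all but
any one of them have a common point in `U`, then all of them have a common point. (Asking for the
point to be in `U` makes the case of a single set meaningful.)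

Otherwise a hyperplane strictly separates one of the sets from the intersection of the others; the
traces of the others on the hyperplane are a smaller family satisfying the same hypotheses, hence
their intersection meets the hyperplane, which is absurd. -/
theorem klee_berge {V ι : Type*} [NormedAddCommGroup V] [NormedSpace ℝ V]
    (s : Finset ι) (hs : s.Nonempty) :
    ∀ (U : Set V) (C : ι → Set V), Convex ℝ U →
      (∀ i ∈ s, IsCompact (C i)) → (∀ i ∈ s, Convex ℝ (C i)) →
      (U = ⋃ i ∈ s, C i) →
      (∀ k ∈ s, ∃ x ∈ U, ∀ j ∈ s, j ≠ k → x ∈ C j) →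
      ∃ x ∈ U, ∀ i ∈ s, x ∈ C i := by
  induction hs using Finset.Nonempty.cons_induction with
  | singleton a =>
    intro U C _ _ _ hU h
    obtain ⟨x, hx, -⟩ := h a (by simp)
    refine ⟨x, hx, ?_⟩
    simpa [hU] using hx
  | cons a s ha hs ih =>
    intro U C hconv hcp hcv hU h
    by_contra! hcon
    have hUc : IsCompact U := hU ▸ (Finset.cons a s ha).isCompact_biUnion hcp
    set D : Set V := U ∩ ⋂ i ∈ s, C i with hD
    have hDconv : Convex ℝ D :=
      hconv.inter (convex_iInter₂ fun i hi => hcv i (Finset.mem_cons_of_mem hi))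
    have hDclosed : IsClosed D := hUc.isClosed.inter
      (isClosed_biInter fun i hi => (hcp i (Finset.mem_cons_of_mem hi)).isClosed)
    have hdisj : Disjoint (C a) D := by
      rw [Set.disjoint_left]
      rintro x hxa ⟨hxU, hx⟩
      obtain ⟨i, hi, hxi⟩ := hcon x hxU
      rcases Finset.mem_cons.1 hi with rfl | hi
      · exact hxi hxa
      · exact hxi (Set.mem_iInter₂.1 hx i hi)
    obtain ⟨f, u, v, hfa, huv, hfD⟩ := geometric_hahn_banach_compact_closed
      (hcv a (by simp)) (hcp a (by simp)) hDconv hDclosed hdisj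
    obtain ⟨d, hdU, hd⟩ := h a (by simp)
    have hd' : ∀ i ∈ s, d ∈ C i := fun i hi =>
      hd i (Finset.mem_cons_of_mem hi) (by rintro rfl; exact ha hi)
    have hfd : u < f d := huv.trans (hfD d ⟨hdU, Set.mem_iInter₂.2 hd'⟩)
    have hHc : IsClosed {x | f x = u} := isClosed_eq f.continuous continuous_const
    have hHv : Convex ℝ {x | f x = u} := convex_hyperplane f.toLinearMap.isLinear u
    obtain ⟨x, hxU, hx⟩ := ih (U ∩ {x | f x = u}) (fun i => C i ∩ {x | f x = u})
      (hconv.inter hHv)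
      (fun i hi => (hcp i (Finset.mem_cons_of_mem hi)).inter_right hHc)
      (fun i hi => (hcv i (Finset.mem_cons_of_mem hi)).inter hHv)
      (by
        ext x
        simp only [hU, Set.mem_inter_iff, Set.mem_iUnion, Set.mem_ofPred_eq, Finset.mem_cons]
        constructor
        · rintro ⟨⟨i, rfl | hi, hxi⟩, hxu⟩
          · exact absurd hxu (hfa x hxi).ne
          · exact ⟨i, hi, hxi, hxu⟩
        · rintro ⟨i, hi, hxi, hxu⟩
          exact ⟨⟨i, Or.inr hi, hxi⟩, hxu⟩)
      (by
        intro k hk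
        obtain ⟨y, hyU, hy⟩ := h k (Finset.mem_cons_of_mem hk)
        have hfy : f y < u := hfa y (hy a (by simp) (by rintro rfl; exact ha hk))
        -- `y` and `d` lie on opposite sides of the hyperplane, inside the convex set `S`.
        set S : Set V := U ∩ ⋂ j ∈ s, ⋂ _ : j ≠ k, C j
        have hS : Convex ℝ S := hconv.inter (convex_iInter₂ fun j hj =>
          convex_iInter fun _ => hcv j (Finset.mem_cons_of_mem hj))
        have hyS : y ∈ S := ⟨hyU, by
          simp only [Set.mem_iInter]
          exact fun j hj hjk => hy j (Finset.mem_cons_of_mem hj) hjk⟩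
        have hdS : d ∈ S := ⟨hdU, by
          simp only [Set.mem_iInter]
          exact fun j hj _ => hd' j hj⟩
        obtain ⟨z, ⟨hzU, hz⟩, hzu⟩ := hS.isPreconnected.intermediate_value hyS hdS
          f.continuous.continuousOn ⟨hfy.le, hfd.le⟩
        simp only [Set.mem_iInter] at hz
        exact ⟨z, ⟨hzU, hzu⟩, fun j hj hjk => ⟨hz j hj hjk, hzu⟩⟩)
    have hfx := hfD x ⟨hxU.1, Set.mem_iInter₂.2 fun i hi => (hx i hi).1⟩
    have hxu : f x = u := hxU.2
    linarith

/-- **KKM lemma for convex sets**: if the convex hull of every subfamily of the points is covered by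
the corresponding closed convex sets, then all these sets have a common point in the hull. By
induction all but any one of the sets meet, so the Klee–Berge theorem applies on the hull. -/
theorem kkm_of_convex {V ι : Type*} [NormedAddCommGroup V] [NormedSpace ℝ V]
    (p : ι → V) (F : ι → Set V) (hcl : ∀ i, IsClosed (F i)) (hcv : ∀ i, Convex ℝ (F i))
    (hcov : ∀ t : Finset ι, convexHull ℝ (p '' t) ⊆ ⋃ i ∈ t, F i)
    (s : Finset ι) (hs : s.Nonempty) :
    ∃ x ∈ convexHull ℝ (p '' s), ∀ i ∈ s, x ∈ F i := by
  classical
  induction s using Finset.strongInduction with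
  | H s ih =>
    have hUc : IsCompact (convexHull ℝ (p '' s)) :=
      (s.finite_toSet.image p).isCompact_convexHull (𝕜 := ℝ)
    have hUv : Convex ℝ (convexHull ℝ (p '' s)) := convex_convexHull ℝ _
    obtain ⟨x, hxU, hx⟩ := klee_berge s hs (convexHull ℝ (p '' s))
      (fun i => F i ∩ convexHull ℝ (p '' s)) hUv
      (fun i _ => hUc.inter_left (hcl i)) (fun i _ => (hcv i).inter hUv)
      (by
        rw [← Set.iUnion₂_inter, eq_comm, Set.inter_eq_right]
        exact hcov s)
      (by
        intro k hk
        rcases (s.erase k).eq_empty_or_nonempty with h0 | hne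
        · refine ⟨p k, subset_convexHull ℝ _ ⟨k, hk, rfl⟩, fun j hj hjk => ?_⟩
          have : j ∈ s.erase k := Finset.mem_erase.2 ⟨hjk, hj⟩
          simp [h0] at this
        · obtain ⟨x, hxU, hx⟩ := ih _ (Finset.erase_ssubset hk) hne
          have hxs : x ∈ convexHull ℝ (p '' s) := convexHull_mono
            (Set.image_mono (Finset.coe_subset.2 (Finset.erase_subset k s))) hxU
          exact ⟨x, hxs, fun j hj hjk => ⟨hx j (Finset.mem_erase.2 ⟨hjk, hj⟩), hxs⟩⟩)
    exact ⟨x, hxU, fun i hi => (hx i hi).1⟩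

/-- **Minty's lemma**: apply the Minty inequality at `a + t (b - a)`, divide by `t` and let
`t → 0⁺`. -/
theorem stampacchia_of_minty {V : Type*} [NormedAddCommGroup V] [InnerProductSpace ℝ V]
    {X : Set V} (hconv : Convex ℝ X) {E : V → V} (hE : ContinuousOn E X) {a b : V}
    (ha : a ∈ X) (hb : b ∈ X) (hM : ∀ p ∈ X, 0 ≤ ⟪E p, p - a⟫) : 0 ≤ ⟪E a, b - a⟫ := by
  have hmem : ∀ t ∈ Set.Icc (0 : ℝ) 1, a + t • (b - a) ∈ X := fun t ht =>
    hconv.add_smul_sub_mem ha hb ht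
  have hcont : ContinuousOn (fun t : ℝ => ⟪E (a + t • (b - a)), b - a⟫) (Set.Icc 0 1) :=
    (hE.comp (by fun_prop) hmem).inner continuousOn_const
  have h0 := ((hcont 0 (by simp)).mono Set.Ioc_subset_Icc_self).tendsto
  simp only [zero_smul, add_zero] at h0
  have : (nhdsWithin (0 : ℝ) (Set.Ioc 0 1)).NeBot := by
    rw [nhdsWithin_Ioc_eq_nhdsGT one_pos]
    infer_instance
  refine ge_of_tendsto h0 (Filter.eventually_of_mem self_mem_nhdsWithin fun t ht => ?_)
  have h := hM _ (hmem t (Set.Ioc_subset_Icc_self ht))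
  rw [add_sub_cancel_left, real_inner_smul_right] at h
  exact nonneg_of_mul_nonneg_right h ht.1

/-- Paper's Theorem 4.3, (a) ⟹ (b): a continuous, strict-properly
quasimonotone map on a nonempty compact convex subset of ℝⁿ has a unique
stationary point (Minty solution). -/
theorem stationary_point_exists_unique_of_strict_properly_quasimonotone
    (n : ℕ) (X : Set (EuclideanSpace ℝ (Fin n)))
    (hne : X.Nonempty) (hcomp : IsCompact X) (hconv : Convex ℝ X)
    (E : EuclideanSpace ℝ (Fin n) → EuclideanSpace ℝ (Fin n))
    (hE : ContinuousOn E X)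
    (hspqm : ∀ (m : ℕ) (p : Fin m → EuclideanSpace ℝ (Fin n)),
      (∀ i, p i ∈ X) → ∀ q ∈ convexHull ℝ (Set.range p),
        (∀ i, q ≠ p i) → ∃ j, 0 < ⟪E (p j), p j - q⟫) :
    ∃! p₀, p₀ ∈ X ∧ ∀ p ∈ X, 0 ≤ ⟪E p, p - p₀⟫ := by
  classical
  refine existsUnique_of_exists_of_unique ?_ ?_
  · let F : X → Set (EuclideanSpace ℝ (Fin n)) := fun p => {q | 0 ≤ ⟪E p, (p : _) - q⟫}
    have hcl : ∀ p, IsClosed (F p) := fun p =>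
      isClosed_le continuous_const (by fun_prop)
    have hcv : ∀ p, Convex ℝ (F p) := by
      intro p
      have : F p = {q | ⟪E p, q⟫ ≤ ⟪E p, (p : EuclideanSpace ℝ (Fin n))⟫} := by
        ext q
        simp [F, inner_sub_right]
      rw [this]
      exact convex_halfSpace_le (innerₛₗ ℝ (E p)).isLinear _
    have hcov : ∀ t : Finset X,
        convexHull ℝ ((Subtype.val : X → EuclideanSpace ℝ (Fin n)) '' t) ⊆ ⋃ p ∈ t, F p := by
      intro t q hq
      simp only [Set.mem_iUnion]
      by_cases hqt : ∃ p ∈ t, q = (p : EuclideanSpace ℝ (Fin n))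
      · obtain ⟨p, hp, rfl⟩ := hqt
        exact ⟨p, hp, by simp [F]⟩
      · push Not at hqt
        have hrange : Set.range (fun i => ((t.equivFin.symm i : X) : EuclideanSpace ℝ (Fin n)))
            = Subtype.val '' (t : Set X) := by
          ext x
          constructor
          · rintro ⟨i, rfl⟩
            exact ⟨_, (t.equivFin.symm i).2, rfl⟩
          · rintro ⟨y, hy, rfl⟩
            exact ⟨t.equivFin ⟨y, hy⟩, by simp⟩
        obtain ⟨j, hj⟩ := hspqm t.card
          (fun i => ((t.equivFin.symm i : X) : EuclideanSpace ℝ (Fin n)))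
          (fun i => (t.equivFin.symm i : X).2) q (by rwa [hrange])
          (fun i => hqt _ (t.equivFin.symm i).2)
        exact ⟨_, (t.equivFin.symm j).2, hj.le⟩
    obtain ⟨x, hxX, hx⟩ := hcomp.inter_iInter_nonempty F hcl (by
      intro t
      rcases t.eq_empty_or_nonempty with rfl | ht
      · simpa using hne
      · obtain ⟨x, hxU, hx⟩ := kkm_of_convex Subtype.val F hcl hcv hcov t ht
        refine ⟨x, convexHull_min ?_ hconv hxU, Set.mem_iInter₂.2 hx⟩
        rintro _ ⟨y, -, rfl⟩
        exact y.2)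
    exact ⟨x, hxX, fun p hp => Set.mem_iInter.1 hx ⟨p, hp⟩⟩
  · rintro a b ⟨ha, hMa⟩ ⟨hb, hMb⟩
    by_contra hab
    have hSa := stampacchia_of_minty hconv hE ha hb hMa
    have hSb := stampacchia_of_minty hconv hE hb ha hMb
    have h1 : a - midpoint ℝ a b = (-(1 / 2) : ℝ) • (b - a) := by
      rw [midpoint_eq_smul_add, invOf_eq_inv]; module
    have h2 : b - midpoint ℝ a b = (-(1 / 2) : ℝ) • (a - b) := by
      rw [midpoint_eq_smul_add, invOf_eq_inv]; module
    obtain ⟨j, hj⟩ := hspqm 2 ![a, b] (by simp [Fin.forall_fin_two, ha, hb]) (midpoint ℝ a b)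
      (by
        simp only [Matrix.range_cons, Matrix.range_empty, Set.union_empty, Set.singleton_union]
        rw [convexHull_pair]
        exact midpoint_mem_segment a b)
      (by simp [Fin.forall_fin_two, hab])
    fin_cases j
    · simp only [Fin.zero_eta, Matrix.cons_val_zero, h1, real_inner_smul_right] at hj
      linarith
    · simp only [Fin.mk_one, Matrix.cons_val_one, Matrix.cons_val_fin_one, h2,
        real_inner_smul_right] at hj
      linarith
end
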